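/- Let μ be an affinely irreducible self-similar measure on ℝ^d associated to a self-similar IFS Φ = {φ_a}_{a∈A} and a strictly positive probability vector (p_a)_{a∈A}. Then there exist a probability space (Ω, 𝒜, ℙ) and a family (μ_ω)_{ω∈Ω} of Borel probability measures on ℝ^d forming a disintegration of μ, and constants C₁, C₂, α > 0, such that: (i) μ(E) = ∫_Ω μ_ω(E) dℙ(ω) for every Borel set E ⊆ ℝ^d; (ii) for every ω ∈ Ω, every x in the support of μ_ω and every r > 0, μ_ω(B(x,2r)) ≤ C₁ μ_ω(B(x,r)); (iii) for every ω ∈ Ω, every x in the support of μ_ω, every affine subspace W ⊊ ℝ^d, every r with 0 < r ≤ 1 and every ε > 0, μ_ω(W^{(εr)} ∩ B(x,r)) ≤ C₂ ε^α μ_ω(B(x,r)). -/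

import Mathlib

noncomputable section
open MeasureTheory Metric Filter Topology

variable {E : Type*} [NormedAddCommGroup E] [NormedSpace ℝ E]

/-- `f` is a contraction with ratio `r ∈ (0,1)`. -/
def IsContractionWith (r : ℝ) (f : E → E) : Prop :=
  0 < r ∧ r < 1 ∧ ∀ x y, ‖f x - f y‖ ≤ r * ‖x - y‖

/-- `f` is a contracting similarity with ratio `r ∈ (0,1)`. -/
def IsSimilarityWith (r : ℝ) (f : E → E) : Prop :=
  0 < r ∧ r < 1 ∧ ∀ x y, ‖f x - f y‖ = r * ‖x - y‖

/-- A self-conformal IFS. -/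
def IsSelfConformalIFS {A : Type*} [Fintype A] (φ : A → E → E) : Prop :=
  2 ≤ Fintype.card A ∧
  (∀ a, ∃ r, IsContractionWith r (φ a)) ∧
  (∀ a, ContDiff ℝ 1 (φ a)) ∧
  (∀ a x, 0 < ‖fderiv ℝ (φ a) x‖ ∧ ∀ v, ‖fderiv ℝ (φ a) x v‖ = ‖fderiv ℝ (φ a) x‖ * ‖v‖) ∧
  (∃ H α₀ : ℝ, 0 < H ∧ 0 < α₀ ∧ ∀ a x y,
    |‖fderiv ℝ (φ a) x‖ - ‖fderiv ℝ (φ a) y‖| ≤ H * ‖x - y‖ ^ α₀) ∧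
  (∃ a₁ a₂ x₁ x₂, φ a₁ x₁ = x₁ ∧ φ a₂ x₂ = x₂ ∧ x₁ ≠ x₂)

/-- A self-similar IFS. -/
def IsSelfSimilarIFS {A : Type*} [Fintype A] (φ : A → E → E) : Prop :=
  2 ≤ Fintype.card A ∧
  (∀ a, ∃ r, IsSimilarityWith r (φ a)) ∧
  (∃ a₁ a₂ x₁ x₂, φ a₁ x₁ = x₁ ∧ φ a₂ x₂ = x₂ ∧ x₁ ≠ x₂)

/-- The IFS is affinely irreducible: no (nonempty) proper affine subspace is preserved. -/
def AffinelyIrreducible {A : Type*} (φ : A → E → E) : Prop :=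
  ¬ ∃ W : AffineSubspace ℝ E, (W : Set E).Nonempty ∧ W ≠ ⊤ ∧
      ∀ a, φ a '' (W : Set E) ⊆ (W : Set E)

/-- Closed `ε`-neighbourhood of an affine subspace. -/
def affNbhd (W : AffineSubspace ℝ E) (ε : ℝ) : Set E :=
  {y | Metric.infDist y (W : Set E) ≤ ε}

/-- topological support of a measure -/
def msupport [MeasurableSpace E] (μ : Measure E) : Set E :=
  {x | ∀ r : ℝ, 0 < r → 0 < μ (Metric.ball x r)}

/-- distance between two sets -/
def setDist (S T : Set E) : ℝ := sInf (Set.image2 dist S T)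

/-- map corresponding to a finite word (as a list) -/
def listMap {A : Type*} (φ : A → E → E) : List A → E → E
  | [] => id
  | a :: l => φ a ∘ listMap φ l

/-- map corresponding to the first `n` letters of an infinite word -/
def wordMap {A : Type*} (φ : A → E → E) : ℕ → (ℕ → A) → E → E
  | 0, _ => id
  | n + 1, a => φ (a 0) ∘ wordMap φ n (fun k => a (k + 1))

/-- set of `Ψ`-well-approximable vectors in `ℝ^d` -/
def WApprox (d : ℕ) (Ψ : ℕ → ℝ) : Set (EuclideanSpace ℝ (Fin d)) :=
  {x | {pq : (Fin d → ℤ) × ℕ | 0 < pq.2 ∧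
        ∀ i, |x i - (pq.1 i : ℝ) / (pq.2 : ℝ)| ≤ Ψ pq.2}.Infinite}

/-- set of singular vectors in `ℝ^d` -/
def Sing (d : ℕ) : Set (EuclideanSpace ℝ (Fin d)) :=
  {x | ∀ c : ℝ, 0 < c → ∃ T : ℝ, 0 < T ∧ ∀ t : ℝ, T ≤ t →
    ∃ q : ℕ, 0 < q ∧ (q : ℝ) < t ∧
      ∀ i, |(q : ℝ) * x i - round ((q : ℝ) * x i)| ≤ c * t ^ (-(1 : ℝ) / (d : ℝ))}

/-! Fix a point `z` fixed by one of the maps. Its orbit is perfect and affinely spanning, so for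
some large level `m` finitely many of the pieces of level `m` (words of length `m`) have
uniformly separated centres which no proper affine subspace comes close to, even after any one
of them is removed. Hence every piece `i` of level `m` belongs to a strongly separated family
that no proper affine subspace comes close to: take `i` together with those of the chosen pieces
that are far from `i`. A piece of level `m` can therefore be drawn in two steps, first one of
these families and then a piece in it. Drawing the families at all levels first and conditioning
on them disintegrates `μ` into measures of a random Moran construction.

For such a measure, strong separation makes its restriction to a small ball an affine image of the
measure attached to the shifted sequence of families, so both estimates need to be proved only at
scales bounded below. There doubling is trivial, and decay holds because at every level a fixed
proportion of the mass stays away from a given affine subspace. -/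

open scoped ENNReal NNReal BoundedContinuousFunction

section ProductMeasures

open ProbabilityTheory

lemma infinitePi_map_head_tail {X : ℕ → Type*} [∀ n, MeasurableSpace (X n)]
    (P : ∀ n, Measure (X n)) [∀ n, IsProbabilityMeasure (P n)] :
    (Measure.infinitePi P).map (fun ω => (ω 0, fun n => ω (n + 1))) =
      (P 0).prod (Measure.infinitePi fun n => P (n + 1)) := by
  have hindep : IndepFun (fun ω : ∀ n, X n => ω 0) (fun ω n => ω (n + 1))
      (Measure.infinitePi P) := by
    have h := iIndepFun_infinitePi (P := P) (X := fun _ x => x) fun _ => measurable_id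
    refine indep_of_indep_of_le_left (indep_of_indep_of_le_right
      (indep_iSup_of_disjoint (fun n => (measurable_pi_apply n).comap_le) h
        (disjoint_compl_right (a := {0}))) ?_) ?_
    · simp only [MeasurableSpace.pi, MeasurableSpace.comap_iSup, MeasurableSpace.comap_comp]
      exact iSup_le fun n => le_iSup₂_of_le (n + 1) n.succ_ne_zero le_rfl
    · exact le_iSup₂_of_le 0 rfl le_rfl
  rw [hindep.map_prod_eq_prod_map_map (measurable_pi_apply 0).aemeasurable
    (measurable_pi_lambda _ fun n => measurable_pi_apply (n + 1)).aemeasurable,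
    Measure.infinitePi_map_eval,
    Measure.map_infinitePi_infinitePi_of_inj (f := fun n => n + 1) (add_left_injective 1)]

variable {ι : Type*} {I X : ι → Type*} [∀ i, MeasurableSpace (I i)] [∀ i, MeasurableSpace (X i)]

lemma measurable_infinitePi_kernel (κ : ∀ i, Kernel (I i) (X i)) [∀ i, IsMarkovKernel (κ i)] :
    Measurable fun ω : ∀ i, I i => Measure.infinitePi fun i => κ i (ω i) := by
  refine Measurable.measure_of_isPiSystem_of_isProbabilityMeasure
    (generateFrom_squareCylinders (α := X)).symm
    (isPiSystem_squareCylinders (fun _ => MeasurableSpace.isPiSystem_measurableSet) (by simp)) ?_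
  rintro _ ⟨s, t, ht, rfl⟩
  simp_rw [Measure.infinitePi_pi _ fun i _ => ht i trivial]
  exact Finset.measurable_prod _ fun i _ =>
    ((κ i).measurable_coe (ht i trivial)).comp (measurable_pi_apply i)

lemma infinitePi_bind_infinitePi (Q : ∀ i, Measure (I i)) [∀ i, IsProbabilityMeasure (Q i)]
    (κ : ∀ i, Kernel (I i) (X i)) [∀ i, IsMarkovKernel (κ i)] :
    (Measure.infinitePi Q).bind (fun ω => Measure.infinitePi fun i => κ i (ω i)) =
      Measure.infinitePi fun i => (Q i).bind (κ i) := by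
  refine Measure.eq_infinitePi _ fun s t ht => ?_
  rw [Measure.bind_apply (.pi s.countable_toSet fun i _ => ht i)
    (measurable_infinitePi_kernel κ).aemeasurable]
  have hmeas (i : ι) : Measurable fun a => κ i a (t i) := (κ i).measurable_coe (ht i)
  simp_rw [Measure.infinitePi_pi _ fun i _ => ht i]
  rw [lintegral_prod_eq_prod_lintegral_of_indepFun]
  · refine Finset.prod_congr rfl fun i _ => ?_
    rw [Measure.bind_apply (ht i) (κ i).aemeasurable, ← Measure.infinitePi_map_eval Q i,
      lintegral_map (hmeas i) (measurable_pi_apply i)]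
  · exact iIndepFun_infinitePi hmeas
  · exact fun i => (hmeas i).comp (measurable_pi_apply i)

end ProductMeasures

lemma map_eq_of_tendsto {Ω X : Type*} [MeasurableSpace Ω] [TopologicalSpace X] [MeasurableSpace X]
    [BorelSpace X] [HasOuterApproxClosed X] {P : Measure Ω} [IsProbabilityMeasure P] {μ : Measure X}
    {Y : ℕ → Ω → X} {Z : Ω → X} (hY : ∀ n, Measurable (Y n)) (hZ : Measurable Z)
    (hlaw : ∀ n, P.map (Y n) = μ) (hlim : ∀ ω, Tendsto (fun n => Y n ω) atTop (𝓝 (Z ω))) :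
    P.map Z = μ := by
  have : IsProbabilityMeasure μ := hlaw 0 ▸ Measure.isProbabilityMeasure_map (hY 0).aemeasurable
  refine ext_of_forall_lintegral_eq_of_IsFiniteMeasure fun g => ?_
  have hg : Measurable fun x => (g x : ℝ≥0∞) := g.continuous.measurable.coe_nnreal_ennreal
  have hlint : Tendsto (fun n => ∫⁻ ω, g (Y n ω) ∂P) atTop (𝓝 (∫⁻ ω, g (Z ω) ∂P)) := by
    refine tendsto_lintegral_of_dominated_convergence (fun _ => (nndist g 0 : ℝ≥0))
      (fun n => hg.comp (hY n)) (fun n => .of_forall fun ω => ?_) (by simp)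
      (.of_forall fun ω => ?_)
    · exact ENNReal.coe_le_coe.2 (BoundedContinuousFunction.NNReal.upper_bound g (Y n ω))
    · exact ENNReal.tendsto_coe.2 ((g.continuous.tendsto _).comp (hlim ω))
  simp_rw [← lintegral_map hg (hY _), hlaw] at hlint
  rw [lintegral_map hg hZ]
  exact tendsto_nhds_unique hlint tendsto_const_nhds

section CodingMap

variable {U X : Type*} {f : U → X → X} {K : ℝ≥0}

lemma wordMap_succ_apply (n : ℕ) (u : ℕ → U) (x : X) :
    wordMap f (n + 1) u x = wordMap f n u (f (u n) x) := by
  induction n generalizing u with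
  | zero => rfl
  | succ n ih => exact congrArg (f (u 0)) (ih fun k => u (k + 1))

lemma lipschitzWith_wordMap [PseudoEMetricSpace X] (hf : ∀ u, LipschitzWith K (f u))
    (n : ℕ) (u : ℕ → U) : LipschitzWith (K ^ n) (wordMap f n u) := by
  induction n generalizing u with
  | zero => exact LipschitzWith.id
  | succ n ih => exact pow_succ' K n ▸ (hf (u 0)).comp (ih fun k => u (k + 1))

lemma mapsTo_wordMap {S : Set X} (hS : ∀ u, Set.MapsTo (f u) S S) (n : ℕ) (u : ℕ → U) :
    Set.MapsTo (wordMap f n u) S S := by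
  induction n generalizing u with
  | zero => exact Set.mapsTo_id S
  | succ n ih => exact (hS (u 0)).comp (ih fun k => u (k + 1))

lemma measurable_wordMap_uncurry [Countable U] [MeasurableSpace U] [DiscreteMeasurableSpace U]
    [MeasurableSpace X] (hf : ∀ u, Measurable (f u)) (n : ℕ) :
    Measurable fun q : (ℕ → U) × X => wordMap f n q.1 q.2 := by
  have hunc : Measurable (Function.uncurry f) :=
    measurable_from_prod_countable_right hf
  induction n with
  | zero => exact measurable_snd
  | succ n ih =>
    refine hunc.comp (f := fun q : (ℕ → U) × X =>
      (q.1 0, wordMap f n (fun k => q.1 (k + 1)) q.2)) (.prodMk (by fun_prop) ?_)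
    exact ih.comp (f := fun q : (ℕ → U) × X => ((fun k => q.1 (k + 1)), q.2)) (by fun_prop)

/-- The coding map of an IFS of contractions: it sends an infinite word to the point to which the
compositions along its initial segments contract. The base point is immaterial. -/
def codingMap [TopologicalSpace X] [Nonempty X] (f : U → X → X) (u : ℕ → U) : X :=
  limUnder atTop fun n => wordMap f n u (Classical.arbitrary X)

variable [Finite U] [MetricSpace X] [CompleteSpace X] [Nonempty X]

lemma tendsto_wordMap_codingMap (hf : ∀ u, ContractingWith K (f u)) (u : ℕ → U) (x : X) :
    Tendsto (fun n => wordMap f n u x) atTop (𝓝 (codingMap f u)) := by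
  set x₀ := Classical.arbitrary X
  have hK : (K : ℝ) < 1 := (hf (u 0)).1
  have hlip := lipschitzWith_wordMap (fun u => (hf u).2)
  obtain ⟨C, hC⟩ := (Set.finite_range fun v => dist x₀ (f v x₀)).bddAbove
  have hstep (n : ℕ) : dist (wordMap f n u x₀) (wordMap f (n + 1) u x₀) ≤ C * K ^ n := by
    rw [wordMap_succ_apply, mul_comm, ← NNReal.coe_pow]
    exact ((hlip n u).dist_le_mul _ _).trans
      (mul_le_mul_of_nonneg_left (hC ⟨u n, rfl⟩) (K ^ n).2)
  have hzero : Tendsto (fun n => wordMap f n u x₀) atTop (𝓝 (codingMap f u)) :=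
    (cauchySeq_of_le_geometric _ _ hK hstep).tendsto_limUnder
  refine hzero.congr_dist (squeeze_zero (fun _ => dist_nonneg)
    (fun n => (hlip n u).dist_le_mul x₀ x) ?_)
  simpa using (tendsto_pow_atTop_nhds_zero_of_lt_one K.2 hK).mul_const (dist x₀ x)

lemma codingMap_mem (hf : ∀ u, ContractingWith K (f u)) {S : Set X} (hS : IsClosed S)
    (hSne : S.Nonempty) (hfS : ∀ u, Set.MapsTo (f u) S S) (u : ℕ → U) : codingMap f u ∈ S :=
  hS.mem_of_tendsto (tendsto_wordMap_codingMap hf u hSne.some)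
    (.of_forall fun n => mapsTo_wordMap hfS n u hSne.some_mem)

lemma codingMap_eq_apply_tail (hf : ∀ u, ContractingWith K (f u)) (u : ℕ → U) :
    codingMap f u = f (u 0) (codingMap f fun n => u (n + 1)) :=
  have hlim := tendsto_wordMap_codingMap hf u (Classical.arbitrary X)
  have htail := tendsto_wordMap_codingMap hf (fun n => u (n + 1)) (Classical.arbitrary X)
  tendsto_nhds_unique (hlim.comp (tendsto_add_atTop_nat 1))
    (((hf (u 0)).2.continuous.tendsto _).comp htail)

variable [MeasurableSpace U] [DiscreteMeasurableSpace U] [MeasurableSpace X] [BorelSpace X]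

lemma measurable_codingMap (hf : ∀ u, ContractingWith K (f u)) : Measurable (codingMap f) :=
  measurable_of_tendsto_metrizable
    (fun n => (measurable_wordMap_uncurry (fun u => (hf u).2.continuous.measurable) n).comp
      measurable_prodMk_right)
    (tendsto_pi_nhds.2 fun u => tendsto_wordMap_codingMap hf u (Classical.arbitrary X))

end CodingMap

section Stationary

variable {U X : Type*} [Fintype U] [MeasurableSpace X]

/-- `μ` is a stationary (self-similar) measure for the maps `f` chosen with probabilities `p`. -/
def IsStationaryMeasure (p : PMF U) (f : U → X → X) (μ : Measure X) : Prop :=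
  μ = ∑ u, p u • μ.map (f u)

lemma IsStationaryMeasure.lintegral_eq {p : PMF U} {f : U → X → X} {μ : Measure X}
    (hμ : IsStationaryMeasure p f μ) (hf : ∀ u, Measurable (f u)) {g : X → ℝ≥0∞}
    (hg : Measurable g) :
    ∫⁻ x, g x ∂μ = ∑ u, p u * ∫⁻ x, g (f u x) ∂μ := by
  conv_lhs => rw [hμ]
  simp [lintegral_finsetSum_measure, lintegral_map hg (hf _)]

lemma lintegral_toMeasure [MeasurableSpace U] [MeasurableSingletonClass U] (p : PMF U)
    (g : U → ℝ≥0∞) : ∫⁻ u, g u ∂p.toMeasure = ∑ u, p u * g u := by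
  simp [lintegral_fintype, p.toMeasure_apply_singleton, mul_comm]

lemma lintegral_infinitePi_toMeasure [MeasurableSpace U] [DiscreteMeasurableSpace U]
    (p : ℕ → PMF U) {g : U → (ℕ → U) → ℝ≥0∞} (hg : ∀ u, Measurable (g u)) :
    ∫⁻ w, g (w 0) (fun n => w (n + 1)) ∂Measure.infinitePi (fun n => (p n).toMeasure) =
      ∑ u, p 0 u * ∫⁻ w, g u w ∂Measure.infinitePi (fun n => (p (n + 1)).toMeasure) := by
  have hunc : Measurable (Function.uncurry g) := measurable_from_prod_countable_right hg
  calc _ = ∫⁻ q, Function.uncurry g q ∂(Measure.infinitePi fun n => (p n).toMeasure).map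
        (fun w => (w 0, fun n => w (n + 1))) := (lintegral_map hunc (by fun_prop)).symm
    _ = _ := by
      rw [infinitePi_map_head_tail fun n => (p n).toMeasure, lintegral_prod _ hunc.aemeasurable,
        lintegral_toMeasure]
      rfl

variable [MeasurableSpace U] [DiscreteMeasurableSpace U]

lemma IsStationaryMeasure.lintegral_wordMap {p : PMF U} {f : U → X → X} {μ : Measure X} [SFinite μ]
    (hμ : IsStationaryMeasure p f μ) (hf : ∀ u, Measurable (f u)) (n : ℕ) {g : X → ℝ≥0∞}
    (hg : Measurable g) :
    ∫⁻ w, ∫⁻ x, g (wordMap f n w x) ∂μ ∂Measure.infinitePi (fun _ => p.toMeasure) =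
      ∫⁻ x, g x ∂μ := by
  induction n generalizing g with
  | zero => simp [wordMap]
  | succ n ih =>
    have hgf (u : U) : Measurable fun x => g (f u x) := hg.comp (hf u)
    have hmeas (u : U) : Measurable fun w : ℕ → U => ∫⁻ x, g (f u (wordMap f n w x)) ∂μ :=
      ((hgf u).comp (measurable_wordMap_uncurry hf n)).lintegral_prod_right'
    calc _ = ∑ u, p u * ∫⁻ w, ∫⁻ x, g (f u (wordMap f n w x)) ∂μ
          ∂Measure.infinitePi (fun _ => p.toMeasure) :=
          lintegral_infinitePi_toMeasure (fun _ => p) hmeas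
      _ = ∑ u, p u * ∫⁻ x, g (f u x) ∂μ := by simp_rw [fun u => ih (hgf u)]
      _ = ∫⁻ x, g x ∂μ := (hμ.lintegral_eq hf hg).symm

/-- The law of the coding map is approximated by the laws of `wordMap f n w x`, where `w` and `x`
are independent with laws `p^ℕ` and `μ`; stationarity says that all of these are equal to `μ`. -/
lemma IsStationaryMeasure.map_codingMap [MetricSpace X] [CompleteSpace X] [BorelSpace X]
    [Nonempty X] {p : PMF U} {f : U → X → X} {K : ℝ≥0} {μ : Measure X} [IsProbabilityMeasure μ]
    (hμ : IsStationaryMeasure p f μ) (hf : ∀ u, ContractingWith K (f u)) :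
    (Measure.infinitePi fun _ => p.toMeasure).map (codingMap f) = μ := by
  have hmeas (u : U) : Measurable (f u) := (hf u).2.continuous.measurable
  have hword (n : ℕ) := measurable_wordMap_uncurry hmeas n
  have hlaw (n : ℕ) : ((Measure.infinitePi fun _ => p.toMeasure).prod μ).map
      (fun q => wordMap f n q.1 q.2) = μ := by
    refine Measure.ext_of_lintegral _ fun g hg => ?_
    have hgword : Measurable fun q : (ℕ → U) × X => g (wordMap f n q.1 q.2) := hg.comp (hword n)
    rw [lintegral_map hg (hword n), lintegral_prod _ hgword.aemeasurable,
      hμ.lintegral_wordMap hmeas n hg]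
  have h := map_eq_of_tendsto hword ((measurable_codingMap hf).comp measurable_fst) hlaw
    fun q => tendsto_wordMap_codingMap hf q.1 q.2
  rwa [← Measure.map_map (measurable_codingMap hf) measurable_fst, Measure.map_fst_prod,
    measure_univ, one_smul] at h

end Stationary

section Bounds

lemma exists_ratio_bounds {U : Type*} [Finite U] {r : U → ℝ} (hr : ∀ u, r u ∈ Set.Ioo 0 1) :
    ∃ s ∈ Set.Ioo (0 : ℝ) 1, ∃ ρ : ℝ≥0, ρ < 1 ∧ ∀ u, r u ∈ Set.Icc s (ρ : ℝ) := by
  cases isEmpty_or_nonempty U with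
  | inl h => exact ⟨1 / 2, by norm_num, 0, one_pos, isEmptyElim⟩
  | inr h =>
    obtain ⟨a, ha⟩ := Finite.exists_min r
    obtain ⟨b, hb⟩ := Finite.exists_max r
    exact ⟨r a, hr a, ⟨r b, (hr b).1.le⟩, (hr b).2, fun u => ⟨ha u, hb u⟩⟩

lemma exists_forall_ofReal_le {T : Type*} [Finite T] {w : T → ℝ≥0∞} (hw : ∀ t, w t ≠ 0) :
    ∃ κ ∈ Set.Ioo (0 : ℝ) 1, ∀ t, ENNReal.ofReal κ ≤ w t := by
  have hev (t : T) : ∀ᶠ κ in 𝓝[>] (0 : ℝ), ENNReal.ofReal κ ≤ w t := by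
    refine (ENNReal.continuous_ofReal.tendsto' 0 0 ENNReal.ofReal_zero).mono_left
      nhdsWithin_le_nhds |>.eventually_le_const ?_
    exact pos_iff_ne_zero.2 (hw t)
  exact ((eventually_mem_set.2 (Ioo_mem_nhdsGT one_pos)).and (eventually_all.2 hev)).exists

lemma sum_erase_le_of_ofReal_le {U : Type*} [Fintype U] [DecidableEq U] {p : PMF U} {κ : ℝ} {u : U}
    (h : ENNReal.ofReal κ ≤ p u) : ∑ v ∈ Finset.univ.erase u, p v ≤ ENNReal.ofReal (1 - κ) := by
  refine (ENNReal.add_le_add_iff_left (p.apply_ne_top u)).1 ?_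
  calc p u + ∑ v ∈ Finset.univ.erase u, p v = ENNReal.ofReal (κ + (1 - κ)) := by
        rw [Finset.add_sum_erase _ _ (Finset.mem_univ u), ← tsum_fintype (L := .unconditional U),
          p.tsum_coe, add_sub_cancel, ENNReal.ofReal_one]
    _ ≤ ENNReal.ofReal κ + ENNReal.ofReal (1 - κ) := ENNReal.ofReal_add_le
    _ ≤ p u + ENNReal.ofReal (1 - κ) := by gcongr

lemma exists_rpow_bound_of_geometric {e s θ : ℝ} (he : 0 < e) (hs : s ∈ Set.Ioo (0 : ℝ) 1)
    (hθ : θ ∈ Set.Ioo (0 : ℝ) 1) :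
    ∃ C α : ℝ, 0 < C ∧ 0 < α ∧ ∀ m : ℝ → ℝ≥0∞, Monotone m → (∀ t, m t ≤ 1) →
      (∀ n : ℕ, m (e * s ^ n) ≤ ENNReal.ofReal (θ ^ n)) →
      ∀ t, 0 < t → m t ≤ ENNReal.ofReal (C * t ^ α) := by
  obtain ⟨hs0, hs1⟩ := hs
  obtain ⟨hθ0, hθ1⟩ := hθ
  set α := Real.logb s θ
  have hα : 0 < α := Real.logb_pos_of_base_lt_one hs0 hs1 hθ0 hθ1
  have hsα : s ^ α = θ := Real.rpow_logb hs0 hs1.ne hθ0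
  refine ⟨θ⁻¹ * (e ^ α)⁻¹, α, by positivity, hα, fun m hmono hm1 hgeo t ht => ?_⟩
  have hscale : θ⁻¹ * (e ^ α)⁻¹ * t ^ α = θ⁻¹ * (t / e) ^ α := by
    rw [Real.div_rpow ht.le he.le, div_eq_inv_mul, mul_assoc]
  rw [hscale]
  rcases le_or_gt e t with het | hte
  · refine (hm1 t).trans (ENNReal.one_le_ofReal.2 ?_)
    exact one_le_mul_of_one_le_of_one_le (one_le_inv_iff₀.2 ⟨hθ0, hθ1.le⟩)
      (Real.one_le_rpow ((one_le_div he).2 het) hα.le)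
  · obtain ⟨n, hn, hn'⟩ := exists_nat_pow_near_of_lt_one (div_pos ht he)
      ((div_le_one he).2 hte.le) hs0 hs1
    refine (hmono ((div_le_iff₀' he).1 hn')).trans ((hgeo n).trans (ENNReal.ofReal_le_ofReal ?_))
    calc θ ^ n = θ⁻¹ * (s ^ (n + 1)) ^ α := by
          rw [← Real.rpow_pow_comm hs0.le, hsα, pow_succ', inv_mul_cancel_left₀ hθ0.ne']
      _ ≤ θ⁻¹ * (t / e) ^ α := by gcongr

end Bounds

section Similarity

variable {V : Type*} [NormedAddCommGroup V] {r : ℝ} {f : V → V}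

lemma IsSimilarityWith.pos (hf : IsSimilarityWith r f) : 0 < r := hf.1

lemma IsSimilarityWith.dist_eq (hf : IsSimilarityWith r f) (x y : V) :
    dist (f x) (f y) = r * dist x y := by
  simpa only [dist_eq_norm] using hf.2.2 x y

lemma IsSimilarityWith.contractingWith (hf : IsSimilarityWith r f) {ρ : ℝ≥0}
    (hrρ : r ≤ ρ) (hρ : ρ < 1) : ContractingWith ρ f :=
  ⟨hρ, LipschitzWith.of_dist_le_mul fun x y => by rw [hf.dist_eq]; gcongr⟩

lemma IsSimilarityWith.injective (hf : IsSimilarityWith r f) :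
    Function.Injective f := fun x y hxy =>
  dist_eq_zero.1 ((mul_eq_zero.1 ((hf.dist_eq x y).symm.trans (dist_eq_zero.2 hxy))).resolve_left
    hf.pos.ne')

lemma IsSimilarityWith.preimage_ball (hf : IsSimilarityWith r f) (x : V)
    (t : ℝ) : f ⁻¹' ball (f x) t = ball x (t / r) := by
  ext y
  rw [Set.mem_preimage, mem_ball, mem_ball, hf.dist_eq, lt_div_iff₀' hf.pos]

lemma IsSimilarityWith.preimage_closedBall (hf : IsSimilarityWith r f) (x : V)
    (t : ℝ) : f ⁻¹' closedBall (f x) t = closedBall x (t / r) := by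
  ext y
  rw [Set.mem_preimage, mem_closedBall, mem_closedBall, hf.dist_eq, le_div_iff₀' hf.pos]

lemma isClosed_affNbhd (W : AffineSubspace ℝ E) (t : ℝ) : IsClosed (affNbhd W t) :=
  isClosed_le (continuous_infDist_pt _) continuous_const

lemma affNbhd_mono (W : AffineSubspace ℝ E) : Monotone (affNbhd W) :=
  fun _ _ hst _ hx => le_trans hx hst

lemma IsSimilarityWith.preimage_affNbhd_subset {f : E →ᵃ[ℝ] E} (hf : IsSimilarityWith r f)
    (hsurj : Function.Surjective f) {W : AffineSubspace ℝ E} (hW : (W : Set E).Nonempty) (t : ℝ) :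
    f ⁻¹' affNbhd W t ⊆ affNbhd (W.comap f) (t / r) := by
  intro y hy
  refine (le_div_iff₀' hf.pos).2 (le_trans ((le_infDist hW).2 ?_) hy)
  rintro w hw
  obtain ⟨v, rfl⟩ := hsurj w
  rw [hf.dist_eq]
  exact mul_le_mul_of_nonneg_left (infDist_le_dist_of_mem hw) hf.pos.le

lemma comap_ne_top_of_surjective {f : E →ᵃ[ℝ] E} (hsurj : Function.Surjective f)
    {W : AffineSubspace ℝ E} (hW : W ≠ ⊤) : W.comap f ≠ ⊤ := by
  refine fun h => hW (eq_top_iff.2 fun w _ => ?_)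
  obtain ⟨v, rfl⟩ := hsurj w
  exact AffineSubspace.mem_comap.1 (h ▸ AffineSubspace.mem_top ℝ E v)

end Similarity

/-- The doubling condition on the support: a Federer measure. -/
def IsFederer [MeasurableSpace E] (C : ℝ) (μ : Measure E) : Prop :=
  ∀ x ∈ msupport μ, ∀ r : ℝ, 0 < r →
    μ (closedBall x (2 * r)) ≤ ENNReal.ofReal C * μ (closedBall x r)

/-- Absolute decay: a neighbourhood of a proper affine subspace captures at most a small proportion
of the mass of any ball of radius at most one centred on the support. -/
def IsAbsolutelyDecaying [MeasurableSpace E] (C α : ℝ) (μ : Measure E) : Prop :=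
  ∀ x ∈ msupport μ, ∀ W : AffineSubspace ℝ E, (W : Set E).Nonempty → W ≠ ⊤ →
    ∀ r ε : ℝ, 0 < r → r ≤ 1 → 0 < ε →
      μ (affNbhd W (ε * r) ∩ closedBall x r) ≤ ENNReal.ofReal (C * ε ^ α) * μ (closedBall x r)

/-- A family, indexed by `I`, of weighted IFSs drawn from one family of affine similarities
`f u : E → E`; in a random Moran construction an index `i` is chosen at each level, and then a map
`f u` with probability `ν i u`. For each single `i`, the pieces `f u '' carrier` that have positive
weight are uniformly separated and do not all come close to one affine subspace. -/
structure MoranSystem (E I U : Type*) [NormedAddCommGroup E] [NormedSpace ℝ E] where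
  f : U → E →ᵃ[ℝ] E
  ratio : U → ℝ
  isSimilarityWith (u : U) : IsSimilarityWith (ratio u) (f u)
  ν : I → PMF U
  carrier : Set E
  isCompact_carrier : IsCompact carrier
  nonempty_carrier : carrier.Nonempty
  mapsTo_carrier (u : U) : Set.MapsTo (f u) carrier carrier
  gap : ℝ
  gap_pos : 0 < gap
  gap_le_dist (i : I) {u v : U} (huv : u ≠ v) (hu : ν i u ≠ 0) (hv : ν i v ≠ 0) {x y : E}
    (hx : x ∈ carrier) (hy : y ∈ carrier) : gap ≤ dist (f u x) (f v y)
  width : ℝ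
  width_pos : 0 < width
  exists_width_lt_infDist (i : I) (W : AffineSubspace ℝ E) (hW : (W : Set E).Nonempty)
    (hW' : W ≠ ⊤) : ∃ u, ν i u ≠ 0 ∧ ∀ x ∈ carrier, width < infDist (f u x) W

namespace MoranSystem

variable {I U : Type*}

section Maps

variable (D : MoranSystem E I U)

lemma exists_ratio_bounds [Finite U] : ∃ s ∈ Set.Ioo (0 : ℝ) 1, ∃ ρ : ℝ≥0, ρ < 1 ∧
    ∀ u, D.ratio u ∈ Set.Icc s (ρ : ℝ) :=
  _root_.exists_ratio_bounds fun u => ⟨(D.isSimilarityWith u).1, (D.isSimilarityWith u).2.1⟩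

lemma exists_ofReal_le_ν [Finite I] [Finite U] :
    ∃ κ ∈ Set.Ioo (0 : ℝ) 1, ∀ i u, D.ν i u ≠ 0 → ENNReal.ofReal κ ≤ D.ν i u := by
  obtain ⟨κ, hκ, h⟩ := exists_forall_ofReal_le (T := {q : I × U // D.ν q.1 q.2 ≠ 0}) fun q => q.2
  exact ⟨κ, hκ, fun i u hu => h ⟨(i, u), hu⟩⟩

lemma exists_contractingWith [Finite U] : ∃ K : ℝ≥0, ∀ u, ContractingWith K (D.f u) :=
  have ⟨_, _, ρ, hρ, h⟩ := D.exists_ratio_bounds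
  ⟨ρ, fun u => (D.isSimilarityWith u).contractingWith (h u).2 hρ⟩

lemma continuous_f (u : U) : Continuous (D.f u) :=
  (LipschitzWith.of_dist_le_mul (K := ⟨D.ratio u, (D.isSimilarityWith u).pos.le⟩) fun x y =>
    ((D.isSimilarityWith u).dist_eq x y).le).continuous

lemma surjective_f [FiniteDimensional ℝ E] (u : U) : Function.Surjective (D.f u) := by
  have hinj : Function.Injective (D.f u).linear :=
    (AffineMap.linear_injective_iff _).2 (D.isSimilarityWith u).injective
  exact (AffineMap.linear_surjective_iff _).1 (LinearMap.injective_iff_surjective.1 hinj)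

end Maps

variable [MeasurableSpace U]

/-- The random measure attached to the sequence of choices `ω`: the law of the point coded by a
word whose `n`-th letter is drawn with weights `ν (ω n)`, independently of the others. -/
def measure [MeasurableSpace E] (D : MoranSystem E I U) (ω : ℕ → I) : Measure E :=
  (Measure.infinitePi fun n => (D.ν (ω n)).toMeasure).map (codingMap fun u => D.f u)

section Finite

variable (D : MoranSystem E I U) (ω : ℕ → I)

variable [DiscreteMeasurableSpace U] [CompleteSpace E] [MeasurableSpace E] [BorelSpace E]

lemma measurable_codingMap [Finite U] : Measurable (codingMap fun u => D.f u) :=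
  have ⟨_, hK⟩ := D.exists_contractingWith
  _root_.measurable_codingMap hK

instance [Finite U] : IsProbabilityMeasure (D.measure ω) :=
  Measure.isProbabilityMeasure_map D.measurable_codingMap.aemeasurable

lemma measure_apply [Fintype U] {S : Set E} (hS : MeasurableSet S) :
    D.measure ω S = ∑ u, D.ν (ω 0) u * D.measure (fun n => ω (n + 1)) (D.f u ⁻¹' S) := by
  obtain ⟨K, hK⟩ := D.exists_contractingWith
  have hpre (u : U) : MeasurableSet (D.f u ⁻¹' S) := (D.continuous_f u).measurable hS
  have hind (u : U) : Measurable ((D.f u ⁻¹' S).indicator (1 : E → ℝ≥0∞)) :=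
    measurable_one.indicator (hpre u)
  calc D.measure ω S
      = ∫⁻ w, (D.f (w 0) ⁻¹' S).indicator 1 (codingMap (fun u => D.f u) fun n => w (n + 1))
          ∂Measure.infinitePi fun n => (D.ν (ω n)).toMeasure := by
        rw [measure, ← lintegral_indicator_one hS,
          lintegral_map (measurable_one.indicator hS) D.measurable_codingMap]
        refine lintegral_congr fun w => ?_
        rw [codingMap_eq_apply_tail hK]
        rfl
    _ = ∑ u, D.ν (ω 0) u * ∫⁻ w, (D.f u ⁻¹' S).indicator 1 (codingMap (fun u => D.f u) w)
          ∂Measure.infinitePi fun n => (D.ν (ω (n + 1))).toMeasure :=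
        lintegral_infinitePi_toMeasure (fun n => D.ν (ω n)) fun u =>
          (hind u).comp D.measurable_codingMap
    _ = _ := by
        simp_rw [← lintegral_map (hind _) D.measurable_codingMap,
          lintegral_indicator_one (hpre _)]
        rfl

variable [Finite U]

lemma measure_carrier : D.measure ω D.carrier = 1 := by
  obtain ⟨K, hK⟩ := D.exists_contractingWith
  have hclosed := D.isCompact_carrier.isClosed
  have hmem : codingMap (fun u => D.f u) ⁻¹' D.carrier = Set.univ :=
    Set.eq_univ_of_forall (codingMap_mem hK hclosed D.nonempty_carrier D.mapsTo_carrier)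
  rw [measure, Measure.map_apply D.measurable_codingMap hclosed.measurableSet, hmem, measure_univ]

lemma measure_eq_zero_of_disjoint_carrier {S : Set E} (hS : Disjoint S D.carrier) :
    D.measure ω S = 0 :=
  measure_mono_null hS.subset_compl_right ((prob_compl_eq_zero_iff
    D.isCompact_carrier.isClosed.measurableSet).2 (D.measure_carrier ω))

lemma msupport_subset_carrier : msupport (D.measure ω) ⊆ D.carrier := by
  intro x hx
  by_contra hxc
  obtain ⟨r, hr, hball⟩ := Metric.isOpen_iff.1 D.isCompact_carrier.isClosed.isOpen_compl x hxc
  exact (hx r hr).ne' (D.measure_eq_zero_of_disjoint_carrier ω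
    (Set.subset_compl_iff_disjoint_right.1 hball))

lemma measure_eq_mul_measure_preimage {u : U} (hu : D.ν (ω 0) u ≠ 0) {x : E} (hx : x ∈ D.carrier)
    {S : Set E} (hS : MeasurableSet S) (hSx : S ⊆ ball (D.f u x) D.gap) :
    D.measure ω S = D.ν (ω 0) u * D.measure (fun n => ω (n + 1)) (D.f u ⁻¹' S) := by
  have := Fintype.ofFinite U
  rw [D.measure_apply ω hS]
  refine Finset.sum_eq_single u (fun v _ hvu => ?_) (by simp)
  rcases eq_or_ne (D.ν (ω 0) v) 0 with hv | hv
  · rw [hv, zero_mul]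
  · rw [D.measure_eq_zero_of_disjoint_carrier, mul_zero]
    refine Set.disjoint_left.2 fun y hyS hy => ?_
    exact (D.gap_le_dist (ω 0) hvu hv hu hy hx).not_gt (hSx hyS)

end Finite

section FiniteDimensional

variable [FiniteDimensional ℝ E] (D : MoranSystem E I U) (ω : ℕ → I)

variable [Finite U] [DiscreteMeasurableSpace U] [MeasurableSpace E] [BorelSpace E]

lemma exists_mem_msupport_tail {x : E} (hx : x ∈ msupport (D.measure ω)) :
    ∃ u, D.ν (ω 0) u ≠ 0 ∧ ∃ y ∈ msupport (D.measure fun n => ω (n + 1)), D.f u y = x := by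
  by_contra! hnone
  have hnull (u : U) : ∀ᶠ t in 𝓝[>] (0 : ℝ),
      D.ν (ω 0) u * D.measure (fun n => ω (n + 1)) (D.f u ⁻¹' ball x t) = 0 := by
    rcases eq_or_ne (D.ν (ω 0) u) 0 with hu | hu
    · simp [hu]
    obtain ⟨y, rfl⟩ := D.surjective_f u x
    obtain ⟨t, ht, hzero⟩ : ∃ t : ℝ, 0 < t ∧ D.measure (fun n => ω (n + 1)) (ball y t) = 0 := by
      simpa [msupport] using fun hy => hnone u hu y hy rfl
    have hr := (D.isSimilarityWith u).pos
    filter_upwards [Ioo_mem_nhdsGT (mul_pos ht hr)] with t' ht'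
    rw [(D.isSimilarityWith u).preimage_ball, mul_eq_zero]
    exact .inr (measure_mono_null (ball_subset_ball ((div_le_iff₀ hr).2 ht'.2.le)) hzero)
  obtain ⟨t, hsum, ht⟩ := ((eventually_all.2 hnull).and self_mem_nhdsWithin).exists
  refine (hx t ht).ne' ?_
  have := Fintype.ofFinite U
  rw [D.measure_apply ω measurableSet_ball]
  exact Finset.sum_eq_zero fun u _ => hsum u

lemma forall_of_scaling {P : (ℕ → I) → E → ℝ → Prop} {t₀ : ℝ} (ht₀ : 0 < t₀)
    (hlarge : ∀ ω, ∀ x ∈ msupport (D.measure ω), ∀ t, t₀ ≤ t → P ω x t)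
    (hsmall : ∀ (ω : ℕ → I) (u : U), D.ν (ω 0) u ≠ 0 →
      ∀ x ∈ msupport (D.measure fun n => ω (n + 1)), ∀ t, 0 < t → t < t₀ →
        P (fun n => ω (n + 1)) x (t / D.ratio u) → P ω (D.f u x) t) :
    ∀ ω, ∀ x ∈ msupport (D.measure ω), ∀ t, 0 < t → P ω x t := by
  obtain ⟨_, -, ρ, hρ, hratio⟩ := D.exists_ratio_bounds
  have hscale (n : ℕ) :
      ∀ ω, ∀ x ∈ msupport (D.measure ω), ∀ t, 0 < t → t₀ * ρ ^ n ≤ t → P ω x t := by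
    induction n with
    | zero => simpa using fun ω x hx t _ => hlarge ω x hx t
    | succ n ih =>
      intro ω x hx t ht htn
      rcases le_or_gt t₀ t with htt₀ | htt₀
      · exact hlarge ω x hx t htt₀
      obtain ⟨u, hu, y, hy, rfl⟩ := D.exists_mem_msupport_tail ω hx
      have hr := (D.isSimilarityWith u).pos
      refine hsmall ω u hu y hy t ht htt₀ (ih _ y hy _ (div_pos ht hr) ((le_div_iff₀ hr).2 ?_))
      calc t₀ * ρ ^ n * D.ratio u ≤ t₀ * ρ ^ n * ρ := by gcongr; exact (hratio u).2
        _ = t₀ * ρ ^ (n + 1) := by ring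
        _ ≤ t := htn
  intro ω x hx t ht
  obtain ⟨n, hn⟩ := exists_pow_lt_of_lt_one (div_pos ht ht₀) (NNReal.coe_lt_one.2 hρ)
  exact hscale n ω x hx t ht ((lt_div_iff₀' ht₀).1 hn).le

lemma ofReal_pow_le_measure_closedBall {κ ρ : ℝ} (hκ : 0 ≤ κ)
    (hweight : ∀ i u, D.ν i u ≠ 0 → ENNReal.ofReal κ ≤ D.ν i u) (hρ : ∀ u, D.ratio u ≤ ρ) (n : ℕ)
    (ω : ℕ → I) {x : E} (hx : x ∈ msupport (D.measure ω)) :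
    ENNReal.ofReal (κ ^ n) ≤ D.measure ω (closedBall x (ρ ^ n * diam D.carrier)) := by
  have := Fintype.ofFinite U
  induction n generalizing ω x with
  | zero =>
    have hsub : D.carrier ⊆ closedBall x (diam D.carrier) := fun y hy =>
      dist_le_diam_of_mem D.isCompact_carrier.isBounded hy (D.msupport_subset_carrier ω hx)
    simpa [← D.measure_carrier ω] using measure_mono hsub
  | succ n ih =>
    obtain ⟨u, hu, y, hy, rfl⟩ := D.exists_mem_msupport_tail ω hx
    have hsub : closedBall y (ρ ^ n * diam D.carrier) ⊆
        D.f u ⁻¹' closedBall (D.f u y) (ρ ^ (n + 1) * diam D.carrier) := by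
      intro z hz
      rw [Set.mem_preimage, mem_closedBall, (D.isSimilarityWith u).dist_eq, pow_succ', mul_assoc]
      exact mul_le_mul (hρ u) hz dist_nonneg ((D.isSimilarityWith u).pos.le.trans (hρ u))
    calc ENNReal.ofReal (κ ^ (n + 1))
        = ENNReal.ofReal κ * ENNReal.ofReal (κ ^ n) := by rw [pow_succ', ENNReal.ofReal_mul hκ]
      _ ≤ D.ν (ω 0) u * D.measure (fun n => ω (n + 1))
            (D.f u ⁻¹' closedBall (D.f u y) (ρ ^ (n + 1) * diam D.carrier)) :=
          mul_le_mul' (hweight _ u hu) ((ih _ hy).trans (measure_mono hsub))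
      _ ≤ _ := by
          rw [D.measure_apply ω measurableSet_closedBall]
          exact Finset.single_le_sum (f := fun u => D.ν (ω 0) u * D.measure (fun n => ω (n + 1))
            (D.f u ⁻¹' _)) (fun _ _ => zero_le) (Finset.mem_univ u)

lemma exists_ofReal_le_measure_closedBall [Finite I] {t : ℝ} (ht : 0 < t) :
    ∃ c : ℝ, 0 < c ∧
      ∀ ω, ∀ x ∈ msupport (D.measure ω), ENNReal.ofReal c ≤ D.measure ω (closedBall x t) := by
  obtain ⟨_, _, ρ, hρ, hratio⟩ := D.exists_ratio_bounds
  obtain ⟨κ, hκ, hweight⟩ := D.exists_ofReal_le_ν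
  have hlim : Tendsto (fun n => (ρ : ℝ) ^ n * diam D.carrier) atTop (𝓝 0) := by
    simpa using (tendsto_pow_atTop_nhds_zero_of_lt_one ρ.2 hρ).mul_const (diam D.carrier)
  obtain ⟨n, hn⟩ := (hlim.eventually_le_const ht).exists
  exact ⟨κ ^ n, pow_pos hκ.1 n, fun ω x hx =>
    (D.ofReal_pow_le_measure_closedBall hκ.1.le hweight (fun u => (hratio u).2) n ω hx).trans
      (measure_mono (closedBall_subset_closedBall hn))⟩

lemma measure_le_ofReal_one_sub_mul {κ : ℝ} {u : U} (hu : ENNReal.ofReal κ ≤ D.ν (ω 0) u)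
    {S : Set E} (hS : MeasurableSet S)
    (hzero : D.measure (fun n => ω (n + 1)) (D.f u ⁻¹' S) = 0) {b : ℝ≥0∞}
    (hb : ∀ v, D.measure (fun n => ω (n + 1)) (D.f v ⁻¹' S) ≤ b) :
    D.measure ω S ≤ ENNReal.ofReal (1 - κ) * b := by
  classical
  have := Fintype.ofFinite U
  calc D.measure ω S
      = ∑ v ∈ Finset.univ.erase u, D.ν (ω 0) v * D.measure (fun n => ω (n + 1)) (D.f v ⁻¹' S) := by
        rw [D.measure_apply ω hS, ← Finset.add_sum_erase _ _ (Finset.mem_univ u), hzero, mul_zero,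
          zero_add]
    _ ≤ (∑ v ∈ Finset.univ.erase u, D.ν (ω 0) v) * b := by
        rw [Finset.sum_mul]
        exact Finset.sum_le_sum fun v _ => mul_le_mul_right (hb v) _
    _ ≤ ENNReal.ofReal (1 - κ) * b := by
        gcongr
        exact sum_erase_le_of_ofReal_le hu

/-- Each level of the construction loses a fixed proportion of the mass of the neighbourhood, since
one piece of positive weight lies away from the subspace. -/
lemma measure_affNbhd_le_pow {κ s : ℝ} (hκ : κ < 1)
    (hweight : ∀ i u, D.ν i u ≠ 0 → ENNReal.ofReal κ ≤ D.ν i u) (hs : 0 < s)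
    (hratio : ∀ u, s ≤ D.ratio u) (hs1 : s ≤ 1) (n : ℕ) (ω : ℕ → I) {W : AffineSubspace ℝ E}
    (hW : (W : Set E).Nonempty) (hW' : W ≠ ⊤) :
    D.measure ω (affNbhd W (D.width * s ^ n)) ≤ ENNReal.ofReal ((1 - κ) ^ n) := by
  induction n generalizing ω W with
  | zero => simpa using prob_le_one
  | succ n ih =>
    obtain ⟨u, hu, hfar⟩ := D.exists_width_lt_infDist (ω 0) W hW hW'
    rw [pow_succ' (1 - κ), ENNReal.ofReal_mul (sub_nonneg.2 hκ.le)]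
    refine D.measure_le_ofReal_one_sub_mul ω (hweight _ u hu) (isClosed_affNbhd _ _).measurableSet
      (D.measure_eq_zero_of_disjoint_carrier _ (Set.disjoint_left.2 fun x hx hxc => ?_))
      fun v => ?_
    · exact (hfar x hxc).not_ge (le_trans hx
        (mul_le_of_le_one_right D.width_pos.le (pow_le_one₀ hs.le hs1)))
    · refine (measure_mono (((D.isSimilarityWith v).preimage_affNbhd_subset (D.surjective_f v) hW
        _).trans (affNbhd_mono _ ?_))).trans
        (ih _ (hW.preimage (D.surjective_f v)) (comap_ne_top_of_surjective (D.surjective_f v) hW'))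
      rw [div_le_iff₀ (D.isSimilarityWith v).pos, pow_succ, ← mul_assoc]
      exact mul_le_mul_of_nonneg_left (hratio v) (by have := D.width_pos; positivity)

lemma exists_measure_affNbhd_le [Finite I] :
    ∃ C α : ℝ, 0 < C ∧ 0 < α ∧ ∀ ω, ∀ W : AffineSubspace ℝ E, (W : Set E).Nonempty → W ≠ ⊤ →
      ∀ t, 0 < t → D.measure ω (affNbhd W t) ≤ ENNReal.ofReal (C * t ^ α) := by
  obtain ⟨s, hs, _, _, hratio⟩ := D.exists_ratio_bounds
  obtain ⟨κ, hκ, hweight⟩ := D.exists_ofReal_le_ν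
  obtain ⟨C, α, hC, hα, hbound⟩ := exists_rpow_bound_of_geometric D.width_pos hs
    (θ := 1 - κ) ⟨sub_pos.2 hκ.2, sub_lt_self 1 hκ.1⟩
  exact ⟨C, α, hC, hα, fun ω W hW hW' => hbound (fun t => D.measure ω (affNbhd W t))
    (fun _ _ hst => measure_mono (affNbhd_mono W hst)) (fun _ => prob_le_one)
    fun n => D.measure_affNbhd_le_pow hκ.2 hweight hs.1 (fun u => (hratio u).1) hs.2.le n ω hW hW'⟩

theorem exists_isFederer [Finite I] : ∃ C : ℝ, 0 < C ∧ ∀ ω, IsFederer C (D.measure ω) := by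
  obtain ⟨c, hc, hmass⟩ := D.exists_ofReal_le_measure_closedBall (half_pos D.gap_pos)
  refine ⟨c⁻¹, inv_pos.2 hc, D.forall_of_scaling (half_pos D.gap_pos) ?_ ?_⟩
  · intro ω x hx t ht
    calc D.measure ω (closedBall x (2 * t)) ≤ 1 := prob_le_one
      _ = ENNReal.ofReal c⁻¹ * ENNReal.ofReal c := by
          rw [← ENNReal.ofReal_mul (inv_pos.2 hc).le, inv_mul_cancel₀ hc.ne', ENNReal.ofReal_one]
      _ ≤ ENNReal.ofReal c⁻¹ * D.measure ω (closedBall x t) := by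
          gcongr
          exact (hmass ω x hx).trans (measure_mono (closedBall_subset_closedBall ht))
  · intro ω u hu x hx t ht htgap hP
    have hxc := D.msupport_subset_carrier _ hx
    have hlocal {r : ℝ} (hr : r ≤ 2 * t) : D.measure ω (closedBall (D.f u x) r) =
        D.ν (ω 0) u * D.measure (fun n => ω (n + 1)) (closedBall x (r / D.ratio u)) := by
      rw [D.measure_eq_mul_measure_preimage ω hu hxc measurableSet_closedBall
        (closedBall_subset_ball (by linarith)), (D.isSimilarityWith u).preimage_closedBall]
    rw [hlocal le_rfl, hlocal (by linarith), mul_div_assoc, mul_left_comm]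
    gcongr

lemma measure_affNbhd_inter_closedBall_le_of_tail {u : U} (hu : D.ν (ω 0) u ≠ 0) {x : E}
    (hx : x ∈ D.carrier) {t : ℝ} (ht : t < D.gap) {W : AffineSubspace ℝ E}
    (hW : (W : Set E).Nonempty) {ε : ℝ} {b : ℝ≥0∞}
    (htail : D.measure (fun n => ω (n + 1))
        (affNbhd (W.comap (D.f u)) (ε * (t / D.ratio u)) ∩ closedBall x (t / D.ratio u)) ≤
      b * D.measure (fun n => ω (n + 1)) (closedBall x (t / D.ratio u))) :
    D.measure ω (affNbhd W (ε * t) ∩ closedBall (D.f u x) t) ≤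
      b * D.measure ω (closedBall (D.f u x) t) := by
  have hsim := D.isSimilarityWith u
  have hball : closedBall (D.f u x) t ⊆ ball (D.f u x) D.gap := closedBall_subset_ball ht
  rw [D.measure_eq_mul_measure_preimage ω hu hx measurableSet_closedBall hball,
    D.measure_eq_mul_measure_preimage ω hu hx
      ((isClosed_affNbhd _ _).measurableSet.inter measurableSet_closedBall)
      (Set.inter_subset_right.trans hball),
    Set.preimage_inter, hsim.preimage_closedBall, mul_left_comm]
  gcongr
  refine (measure_mono (Set.inter_subset_inter_left _ ?_)).trans htail
  rw [← mul_div_assoc]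
  exact hsim.preimage_affNbhd_subset (D.surjective_f u) hW _

theorem exists_isAbsolutelyDecaying [Finite I] :
    ∃ C α : ℝ, 0 < C ∧ 0 < α ∧ ∀ ω, IsAbsolutelyDecaying C α (D.measure ω) := by
  obtain ⟨s, hs, _, _, hratio⟩ := D.exists_ratio_bounds
  obtain ⟨B, α, hB, hα, hglobal⟩ := D.exists_measure_affNbhd_le
  obtain ⟨t₀, ht₀, ht₀s, ht₀gap⟩ : ∃ t₀ : ℝ, 0 < t₀ ∧ t₀ ≤ s ∧ t₀ ≤ D.gap :=
    ⟨min s D.gap, lt_min hs.1 D.gap_pos, min_le_left _ _, min_le_right _ _⟩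
  obtain ⟨c, hc, hmass⟩ := D.exists_ofReal_le_measure_closedBall ht₀
  suffices ∀ ω, ∀ x ∈ msupport (D.measure ω), ∀ t, 0 < t → t ≤ 1 →
      ∀ W : AffineSubspace ℝ E, (W : Set E).Nonempty → W ≠ ⊤ → ∀ ε : ℝ, 0 < ε →
      D.measure ω (affNbhd W (ε * t) ∩ closedBall x t) ≤
        ENNReal.ofReal (B * c⁻¹ * ε ^ α) * D.measure ω (closedBall x t) from
    ⟨B * c⁻¹, α, by positivity, hα, fun ω x hx W hW hW' t ε ht ht1 hε =>
      this ω x hx t ht ht1 W hW hW' ε hε⟩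
  refine D.forall_of_scaling ht₀ ?_ ?_
  · intro ω x hx t ht ht1 W hW hW' ε hε
    have htpos : 0 < t := ht₀.trans_le ht
    calc D.measure ω (affNbhd W (ε * t) ∩ closedBall x t)
        ≤ ENNReal.ofReal (B * (ε * t) ^ α) :=
          (measure_mono Set.inter_subset_left).trans (hglobal ω W hW hW' _ (by positivity))
      _ ≤ ENNReal.ofReal (B * c⁻¹ * ε ^ α * c) := by
          refine ENNReal.ofReal_le_ofReal ?_
          rw [mul_right_comm, inv_mul_cancel_right₀ hc.ne']
          gcongr
          exact mul_le_of_le_one_right hε.le ht1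
      _ ≤ ENNReal.ofReal (B * c⁻¹ * ε ^ α) * D.measure ω (closedBall x t) := by
          rw [ENNReal.ofReal_mul (by positivity)]
          gcongr
          exact (hmass ω x hx).trans (measure_mono (closedBall_subset_closedBall ht))
  · intro ω u hu x hx t _ htt₀ hP _ W hW hW' ε hε
    exact D.measure_affNbhd_inter_closedBall_le_of_tail ω hu (D.msupport_subset_carrier _ hx)
      (htt₀.trans_le ht₀gap) hW
      (hP ((div_le_one (D.isSimilarityWith u).pos).2 ((htt₀.le.trans ht₀s).trans (hratio u).1))
        (W.comap (D.f u)) (hW.preimage (D.surjective_f u))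
        (comap_ne_top_of_surjective (D.surjective_f u) hW') ε hε)

end FiniteDimensional

section Average

open ProbabilityTheory

variable [MeasurableSpace I] [DiscreteMeasurableSpace I] (D : MoranSystem E I U)

/-- The weights of the IFSs of the system, as a Markov kernel from the index set. -/
def weightKernel : Kernel I U where
  toFun i := (D.ν i).toMeasure
  measurable' := .of_discrete

instance : IsMarkovKernel D.weightKernel :=
  ⟨fun i => inferInstanceAs (IsProbabilityMeasure (D.ν i).toMeasure)⟩

lemma bind_weightKernel [Finite I] (q : PMF I) :
    q.toMeasure.bind D.weightKernel = (q.bind D.ν).toMeasure := by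
  have := Fintype.ofFinite I
  ext S hS
  rw [PMF.toMeasure_bind_apply _ _ _ hS, Measure.bind_apply hS D.weightKernel.aemeasurable,
    lintegral_toMeasure, tsum_fintype]
  rfl

variable [DiscreteMeasurableSpace U] [CompleteSpace E] [MeasurableSpace E] [BorelSpace E]

lemma measurable_measure [Finite U] : Measurable D.measure :=
  (Measure.measurable_map _ D.measurable_codingMap).comp
    (measurable_infinitePi_kernel fun _ => D.weightKernel)

lemma lintegral_measure_apply [Finite I] [Fintype U] {q : PMF I} {μ : Measure E}
    [IsProbabilityMeasure μ] (hμ : IsStationaryMeasure (q.bind D.ν) (fun u => D.f u) μ) {S : Set E}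
    (hS : MeasurableSet S) :
    ∫⁻ ω, D.measure ω S ∂Measure.infinitePi (fun _ => q.toMeasure) = μ S := by
  obtain ⟨K, hK⟩ := D.exists_contractingWith
  have hpre := D.measurable_codingMap hS
  calc ∫⁻ ω, D.measure ω S ∂Measure.infinitePi (fun _ => q.toMeasure)
      = ∫⁻ ω, Measure.infinitePi (fun n => D.weightKernel (ω n))
          (codingMap (fun u => D.f u) ⁻¹' S) ∂Measure.infinitePi (fun _ => q.toMeasure) :=
        lintegral_congr fun ω => Measure.map_apply D.measurable_codingMap hS
    _ = Measure.infinitePi (fun _ => (q.bind D.ν).toMeasure)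
          (codingMap (fun u => D.f u) ⁻¹' S) := by
        rw [← Measure.bind_apply hpre
          (measurable_infinitePi_kernel fun _ => D.weightKernel).aemeasurable,
          infinitePi_bind_infinitePi (fun _ => q.toMeasure) fun _ => D.weightKernel,
          D.bind_weightKernel]
    _ = μ S := by rw [← Measure.map_apply D.measurable_codingMap hS, hμ.map_codingMap hK]

end Average

end MoranSystem

section AffineSpanning

variable [FiniteDimensional ℝ E] {O : Set E}

/-- Affine independence is an open condition, so points of a proper subspace cannot approximate all
the points of an affine basis. -/
lemma exists_finset_lt_infDist (hO : affineSpan ℝ O = ⊤) :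
    ∃ F : Finset E, ↑F ⊆ O ∧ ∃ c : ℝ, 0 < c ∧ ∀ W : AffineSubspace ℝ E, (W : Set E).Nonempty →
      W ≠ ⊤ → ∃ x ∈ F, c < infDist x W := by
  obtain ⟨t, htO, htspan, hind⟩ := exists_affineIndependent ℝ E O
  have hfin : t.Finite := finite_set_of_fin_dim_affineIndependent ℝ hind
  have : Fintype t := hfin.fintype
  have hcard : Fintype.card t = Module.finrank ℝ E + 1 := by
    rw [← hind.affineSpan_eq_top_iff_card_eq_finrank_add_one, Subtype.range_coe, htspan, hO]
  have hopen : IsOpen {w : t → E | AffineIndependent ℝ w} := isOpen_setOfPred_affineIndependent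
  obtain ⟨ε, hε, hball⟩ := Metric.eventually_nhds_iff_ball.1 (hopen.eventually_mem hind)
  refine ⟨hfin.toFinset, by simpa using htO, ε / 2, half_pos hε, fun W hW hW' => ?_⟩
  by_contra! hnear
  have happrox (x : t) : ∃ w ∈ W, dist w x < ε := by
    obtain ⟨w, hw, hwx⟩ := (infDist_lt_iff hW).1
      ((hnear x (hfin.mem_toFinset.2 x.2)).trans_lt (half_lt_self hε))
    exact ⟨w, hw, dist_comm w x ▸ hwx⟩
  choose w hwW hwx using happrox
  have hwspan : affineSpan ℝ (Set.range w) = ⊤ :=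
    ((hball w ((dist_pi_lt_iff hε).2 hwx)).affineSpan_eq_top_iff_card_eq_finrank_add_one).2 hcard
  exact hW' (top_unique (hwspan ▸ affineSpan_le.2 (Set.range_subset_iff.2 hwW)))

lemma affineSpan_sdiff_finset_of_preperfect (hO : Preperfect O) (F : Finset E) :
    affineSpan ℝ (O \ F) = affineSpan ℝ O := by
  refine le_antisymm (affineSpan_mono ℝ Set.sdiff_subset) (affineSpan_le.2 fun x hx => ?_)
  have hclosed : IsClosed (affineSpan ℝ (O \ F) : Set E) :=
    AffineSubspace.closed_of_finiteDimensional _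
  refine closure_minimal (subset_affineSpan ℝ _) hclosed (mem_closure_iff_frequently.2 ?_)
  have haway : ∀ᶠ y in 𝓝 x, y ∉ (F : Set E) \ {x} :=
    (F.finite_toSet.subset Set.sdiff_subset).isClosed.isOpen_compl.mem_nhds (by simp)
  refine ((accPt_iff_frequently.1 (hO x hx)).and_eventually haway).mono ?_
  rintro y ⟨⟨hyx, hy⟩, hyF⟩
  exact ⟨hy, fun h => hyF ⟨h, hyx⟩⟩

lemma exists_finset_ne_lt_infDist (hO : affineSpan ℝ O = ⊤) (hperf : Preperfect O) :
    ∃ F : Finset E, ↑F ⊆ O ∧ ∃ c : ℝ, 0 < c ∧ ∀ (y : E) (W : AffineSubspace ℝ E),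
      (W : Set E).Nonempty → W ≠ ⊤ → ∃ x ∈ F, x ≠ y ∧ c < infDist x W := by
  classical
  obtain ⟨F₁, hF₁, c₁, hc₁, h₁⟩ := exists_finset_lt_infDist hO
  obtain ⟨F₂, hF₂, c₂, hc₂, h₂⟩ :=
    exists_finset_lt_infDist ((affineSpan_sdiff_finset_of_preperfect hperf F₁).trans hO)
  refine ⟨F₁ ∪ F₂, ?_, min c₁ c₂, lt_min hc₁ hc₂, fun y W hW hW' => ?_⟩
  · rw [Finset.coe_union]
    exact Set.union_subset hF₁ (hF₂.trans Set.sdiff_subset)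
  by_cases hy : y ∈ F₁
  · obtain ⟨x, hx, hxW⟩ := h₂ W hW hW'
    refine ⟨x, Finset.mem_union_right _ hx, ?_, (min_le_right _ _).trans_lt hxW⟩
    rintro rfl
    exact (hF₂ hx).2 hy
  · obtain ⟨x, hx, hxW⟩ := h₁ W hW hW'
    exact ⟨x, Finset.mem_union_left _ hx, ne_of_mem_of_not_mem hx hy,
      (min_le_left _ _).trans_lt hxW⟩

end AffineSpanning

section Metric

variable {X : Type*}

lemma exists_pairwise_le_dist [MetricSpace X] (F : Finset X) :
    ∃ δ : ℝ, 0 < δ ∧ (F : Set X).Pairwise fun x y => δ ≤ dist x y := by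
  have hev : ∀ᶠ δ in 𝓝[>] (0 : ℝ), ∀ x ∈ F, ∀ y ∈ F, x ≠ y → δ ≤ dist x y := by
    simp only [eventually_all_finset, eventually_imp_distrib_left]
    exact fun x _ y _ hxy => (eventually_le_nhds (dist_pos.2 hxy)).filter_mono nhdsWithin_le_nhds
  exact (eventually_mem_nhdsWithin.and hev).exists

lemma exists_forall_ne_le_dist [PseudoMetricSpace X] {U : Type*} {c : U → X} {B : Set U} {δ : ℝ}
    (hB : B.Pairwise fun u v => 2 * δ ≤ dist (c u) (c v)) (x : X) :
    ∃ y, ∀ u ∈ B, c u ≠ y → δ ≤ dist (c u) x := by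
  by_cases h : ∃ v ∈ B, dist (c v) x < δ
  · obtain ⟨v, hv, hvx⟩ := h
    refine ⟨c v, fun u hu huv => ?_⟩
    linarith [hB hu hv (ne_of_apply_ne c huv), dist_triangle_right (c u) (c v) x]
  · push Not at h
    exact ⟨x, fun u hu _ => h u hu⟩

lemma exists_mapsTo_closedBall {A : Type*} [Finite A] [PseudoMetricSpace X] {f : A → X → X}
    {K : ℝ≥0} (hK : K < 1) (hf : ∀ a, LipschitzWith K (f a)) (z : X) :
    ∃ R : ℝ, 0 < R ∧ ∀ a, Set.MapsTo (f a) (closedBall z R) (closedBall z R) := by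
  have hK' : 0 < 1 - (K : ℝ) := sub_pos.2 hK
  obtain ⟨M, hM⟩ := (Set.finite_range fun a => dist (f a z) z).bddAbove
  have hMR (a : A) : dist (f a z) z ≤ (1 - K) * (max M 1 / (1 - K)) := by
    rw [mul_div_cancel₀ _ hK'.ne']
    exact (hM ⟨a, rfl⟩).trans (le_max_left _ _)
  refine ⟨max M 1 / (1 - K), by positivity, fun a x hx => ?_⟩
  calc dist (f a x) z ≤ dist (f a x) (f a z) + dist (f a z) z := dist_triangle _ _ _
    _ ≤ K * (max M 1 / (1 - K)) + (1 - K) * (max M 1 / (1 - K)) := by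
        gcongr
        · exact ((hf a).dist_le_mul x z).trans (by gcongr; exact hx)
        · exact hMR a
    _ = max M 1 / (1 - K) := by ring

end Metric

section Words

variable {A : Type*}

/-- The composition `g (u 0) ∘ ⋯ ∘ g (u (m - 1))` of the maps of an affine IFS along a finite
word `u`. -/
def wordAffineMap (g : A → E →ᵃ[ℝ] E) {m : ℕ} (u : Fin m → A) : E →ᵃ[ℝ] E :=
  (List.ofFn fun i => g (u i)).prod

lemma wordAffineMap_cons (g : A → E →ᵃ[ℝ] E) {m : ℕ} (a : A) (u : Fin m → A) :
    wordAffineMap g (Fin.cons a u : Fin (m + 1) → A) = (g a).comp (wordAffineMap g u) := by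
  rw [wordAffineMap, List.ofFn_succ, List.prod_cons]
  rfl

lemma mapsTo_wordAffineMap {g : A → E →ᵃ[ℝ] E} {S : Set E} {m : ℕ} (u : Fin m → A)
    (hS : ∀ i, Set.MapsTo (g (u i)) S S) : Set.MapsTo (wordAffineMap g u) S S := by
  induction u using Fin.consInduction with
  | elim0 => exact fun x hx => by simpa [wordAffineMap] using hx
  | cons a u ih =>
    exact wordAffineMap_cons g a u ▸ (hS 0).comp (ih fun i => hS i.succ)

lemma dist_wordAffineMap {g : A → E →ᵃ[ℝ] E} {r : A → ℝ} (hg : ∀ a, IsSimilarityWith (r a) (g a))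
    {m : ℕ} (u : Fin m → A) (x y : E) :
    dist (wordAffineMap g u x) (wordAffineMap g u y) = (∏ i, r (u i)) * dist x y := by
  induction u using Fin.consInduction with
  | elim0 => simp [wordAffineMap]
  | cons a u ih =>
    rw [wordAffineMap_cons, AffineMap.comp_apply, AffineMap.comp_apply, (hg a).dist_eq, ih,
      Fin.prod_univ_succ, mul_assoc]
    rfl

lemma isSimilarityWith_wordAffineMap {g : A → E →ᵃ[ℝ] E} {r : A → ℝ}
    (hg : ∀ a, IsSimilarityWith (r a) (g a)) {m : ℕ} (hm : m ≠ 0) (u : Fin m → A) :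
    IsSimilarityWith (∏ i, r (u i)) (wordAffineMap g u) := by
  have : NeZero m := ⟨hm⟩
  refine ⟨Finset.prod_pos fun i _ => (hg (u i)).1, ?_, fun x y => ?_⟩
  · exact (Finset.prod_lt_prod_of_nonempty (fun i _ => (hg (u i)).1) (fun i _ => (hg (u i)).2.1)
      Finset.univ_nonempty).trans_eq Finset.prod_const_one
  · simpa only [dist_eq_norm] using dist_wordAffineMap hg u x y

variable [Fintype A]

/-- The law of a word of `m` independent letters with law `p`. -/
def wordPMF (p : PMF A) (m : ℕ) : PMF (Fin m → A) :=
  PMF.ofFintype (fun u => ∏ i, p (u i)) <| by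
    classical
    have hp : ∑ a, p a = 1 := by rw [← tsum_fintype (L := .unconditional A), p.tsum_coe]
    rw [← Fintype.piFinset_univ, Finset.sum_prod_piFinset Finset.univ fun _ a => p a, hp,
      Finset.prod_const_one]

lemma wordPMF_ne_zero {p : PMF A} (hp : ∀ a, p a ≠ 0) (m : ℕ) (u : Fin m → A) :
    wordPMF p m u ≠ 0 := by
  simpa [wordPMF] using Finset.prod_ne_zero_iff.2 fun i _ => hp (u i)

lemma sum_wordPMF_succ (p : PMF A) (m : ℕ) (h : (Fin (m + 1) → A) → ℝ≥0∞) :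
    ∑ u, wordPMF p (m + 1) u * h u = ∑ a, p a * ∑ u, wordPMF p m u * h (Fin.cons a u) := by
  rw [← (Fin.consEquiv fun _ => A).sum_comp, Fintype.sum_prod_type]
  simp [wordPMF, Fin.prod_univ_succ, Finset.mul_sum, mul_assoc, Fin.consEquiv]

variable [MeasurableSpace E]

lemma lintegral_eq_sum_wordPMF {p : PMF A} {g : A → E →ᵃ[ℝ] E} {μ : Measure E}
    (hμ : IsStationaryMeasure p (fun a => g a) μ) (hg : ∀ a, Measurable (g a)) (m : ℕ)
    {h : E → ℝ≥0∞} (hh : Measurable h) :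
    ∫⁻ x, h x ∂μ = ∑ u, wordPMF p m u * ∫⁻ x, h (wordAffineMap g u x) ∂μ := by
  induction m generalizing h with
  | zero => simp [wordPMF, wordAffineMap]
  | succ m ih =>
    rw [hμ.lintegral_eq hg hh, sum_wordPMF_succ]
    simp_rw [wordAffineMap_cons]
    exact Finset.sum_congr rfl fun a _ => congrArg _ (ih (hh.comp (hg a)))

lemma isStationaryMeasure_wordPMF {p : PMF A} {g : A → E →ᵃ[ℝ] E} {μ : Measure E}
    (hμ : IsStationaryMeasure p (fun a => g a) μ) (hg : ∀ a, Measurable (g a)) (m : ℕ) :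
    IsStationaryMeasure (wordPMF p m) (fun u => wordAffineMap g u) μ := by
  have hword {k : ℕ} (u : Fin k → A) : Measurable (wordAffineMap g u) := by
    induction u using Fin.consInduction with
    | elim0 => simpa [wordAffineMap] using measurable_id
    | cons a u ih => exact wordAffineMap_cons g a u ▸ (hg a).comp ih
  refine Measure.ext_of_lintegral _ fun h hh => ?_
  rw [lintegral_eq_sum_wordPMF hμ hg m hh]
  simp [lintegral_finsetSum_measure, lintegral_map hh (hword _)]

end Words

section Orbit

variable {A : Type*} {g : A → E →ᵃ[ℝ] E} {z : E}

/-- The points that are images of `z` under words of every sufficiently large length. When `z` is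
fixed by one of the maps this is the orbit of `z`; asking for all large lengths lets finitely many
points be reached simultaneously by words of one length. -/
def wordOrbit (g : A → E →ᵃ[ℝ] E) (z : E) : Set E :=
  {x | ∀ᶠ m in atTop, ∃ u : Fin m → A, wordAffineMap g u z = x}

lemma mem_wordOrbit_self {a : A} (hz : g a z = z) : z ∈ wordOrbit g z :=
  .of_forall fun _ =>
    ⟨fun _ => a, mapsTo_wordAffineMap (S := {z}) _ (fun _ => by simpa using hz) rfl⟩

lemma mapsTo_wordOrbit (g : A → E →ᵃ[ℝ] E) (z : E) (a : A) :
    Set.MapsTo (g a) (wordOrbit g z) (wordOrbit g z) := by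
  intro x hx
  change ∀ᶠ m in atTop, _
  rw [← map_add_atTop_eq_nat 1, eventually_map]
  filter_upwards [hx] with m ⟨u, hu⟩
  exact ⟨Fin.cons a u, by rw [wordAffineMap_cons, AffineMap.comp_apply, hu]⟩

lemma affineSpan_eq_top_of_affinelyIrreducible {O : Set E} (hirr : AffinelyIrreducible fun a => g a)
    (hne : O.Nonempty) (hO : ∀ a, Set.MapsTo (g a) O O) : affineSpan ℝ O = ⊤ := by
  by_contra htop
  refine hirr ⟨affineSpan ℝ O, hne.mono (subset_affineSpan ℝ O), htop, fun a => ?_⟩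
  rw [← AffineSubspace.coe_map, AffineSubspace.map_span]
  exact affineSpan_mono ℝ (hO a).image_subset

/-- Near `w z` lie the points `w (g a₁ ^ n (g a₂ z))`, which differ from it and tend to it. -/
lemma preperfect_wordOrbit [FiniteDimensional ℝ E] {r : A → ℝ}
    (hg : ∀ a, IsSimilarityWith (r a) (g a)) {a₁ a₂ : A} (hz : g a₁ z = z)
    (hne : g a₂ z ≠ z) : Preperfect (wordOrbit g z) := by
  intro x hx
  obtain ⟨m, ⟨u, rfl⟩, hm⟩ := (hx.and (eventually_ne_atTop 0)).exists
  have hword := isSimilarityWith_wordAffineMap hg hm u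
  have hlim : Tendsto (fun n => wordAffineMap g u ((g a₁)^[n] (g a₂ z))) atTop
      (𝓝 (wordAffineMap g u z)) := by
    have hcontr := (hg a₁).contractingWith (ρ := ⟨r a₁, (hg a₁).pos.le⟩) le_rfl (hg a₁).2.1
    have hiter := hcontr.tendsto_iterate_fixedPoint (g a₂ z)
    rw [← hcontr.fixedPoint_unique hz] at hiter
    exact ((wordAffineMap g u).continuous_of_finiteDimensional.tendsto z).comp hiter
  rw [accPt_iff_frequently]
  refine hlim.frequently (Frequently.of_forall fun n => ⟨fun h => hne ?_, ?_⟩)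
  · exact (hg a₁).injective.iterate n
      ((hword.injective h).trans (Function.iterate_fixed hz n).symm)
  · exact mapsTo_wordAffineMap u (fun _ => mapsTo_wordOrbit g z _)
      ((mapsTo_wordOrbit g z a₁).iterate n (mapsTo_wordOrbit g z a₂ (mem_wordOrbit_self hz)))

end Orbit

lemma exists_pmf_bind_eq {I U : Type*} [Finite I] {p : PMF U} (hp : ∀ u, p u ≠ 0)
    {G : I → U → Prop} (hGI : ∀ i, ∃ u, G i u) (hGU : ∀ u, ∃ i, G i u) :
    ∃ (q : PMF I) (ν : I → PMF U), q.bind ν = p ∧ ∀ i u, ν i u ≠ 0 ↔ G i u := by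
  classical
  have := Fintype.ofFinite I
  choose i₀ hi₀ using hGU
  let κ (u : U) : PMF I := PMF.uniformOfFinset {i | G i u} ⟨i₀ u, by simpa using hi₀ u⟩
  have hκ (u : U) (i : I) : κ u i ≠ 0 ↔ G i u :=
    (PMF.mem_support_uniformOfFinset_iff _ i).trans (Finset.mem_filter_univ i)
  have hq (i : I) : ∑' u, p u * κ u i ≠ 0 := by
    obtain ⟨u, hu⟩ := hGI i
    exact fun h => mul_ne_zero (hp u) ((hκ u i).2 hu) (ENNReal.tsum_eq_zero.1 h u)
  have hqtop (i : I) : ∑' u, p u * κ u i ≠ ∞ := by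
    rw [← PMF.bind_apply]
    exact PMF.apply_ne_top _ i
  refine ⟨p.bind κ, fun i => PMF.normalize (fun u => p u * κ u i) (hq i) (hqtop i), ?_, ?_⟩
  · ext u
    simp only [PMF.bind_apply, PMF.normalize_apply]
    have (i : I) : (∑' v, p v * κ v i) * (p u * κ u i * (∑' v, p v * κ v i)⁻¹) = p u * κ u i := by
      rw [mul_comm, mul_assoc, ENNReal.inv_mul_cancel (hq i) (hqtop i), mul_one]
    simp_rw [this, ENNReal.tsum_mul_left, (κ u).tsum_coe, mul_one]
  · intro i u
    simp [hqtop, hp, ← hκ]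

section Selection

variable {U : Type*} {δ : ℝ}

/-- The pieces selected by a prescribed index `i`: the piece `i` itself, so that every piece is
selected by some index, and the pieces of a fixed family `B` whose centres `c u` are far from that
of `i`. -/
def selectedPieces {X : Type*} [PseudoMetricSpace X] (c : U → X) (B : Set U) (δ : ℝ) (i : U) :
    Set U :=
  insert i {u ∈ B | δ ≤ dist (c u) (c i)}

lemma pairwise_selectedPieces {X : Type*} [PseudoMetricSpace X] {c : U → X} {B : Set U}
    (hδ : 0 < δ) (hB : B.Pairwise fun u v => 2 * δ ≤ dist (c u) (c v)) (i : U) :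
    (selectedPieces c B δ i).Pairwise fun u v => δ ≤ dist (c u) (c v) := by
  have : Std.Symm fun u v => δ ≤ dist (c u) (c v) := ⟨fun u v h => dist_comm (c u) (c v) ▸ h⟩
  refine Set.pairwise_insert_of_symm.2 ⟨fun u hu v hv huv => ?_, fun u hu _ => ?_⟩
  · linarith [hB hu.1 hv.1 huv]
  · exact dist_comm (c u) (c i) ▸ hu.2

lemma exists_mem_selectedPieces_lt_infDist {c : U → E} {B : Set U} {w : ℝ}
    (hB : B.Pairwise fun u v => 2 * δ ≤ dist (c u) (c v))
    (hspread : ∀ (y : E) (W : AffineSubspace ℝ E), (W : Set E).Nonempty → W ≠ ⊤ →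
      ∃ u ∈ B, c u ≠ y ∧ w < infDist (c u) W)
    (i : U) {W : AffineSubspace ℝ E} (hW : (W : Set E).Nonempty) (hW' : W ≠ ⊤) :
    ∃ u ∈ selectedPieces c B δ i, w < infDist (c u) W := by
  obtain ⟨y, hy⟩ := exists_forall_ne_le_dist hB (c i)
  obtain ⟨u, hu, huy, huW⟩ := hspread y W hW hW'
  exact ⟨u, .inr ⟨hu, hy u hu huy⟩, huW⟩

lemma exists_moranSystem_of_pairwise_le_dist [Finite U] {f : U → E →ᵃ[ℝ] E} {r : U → ℝ}
    (hf : ∀ u, IsSimilarityWith (r u) (f u)) {p : PMF U} (hp : ∀ u, p u ≠ 0) {S : Set E}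
    (hS : IsCompact S) {z : E} (hz : z ∈ S) (hfS : ∀ u, Set.MapsTo (f u) S S) {B : Set U} {w : ℝ}
    (hδ : 0 < δ) (hw : 0 < w) (hB : B.Pairwise fun u v => 2 * δ ≤ dist (f u z) (f v z))
    (hspread : ∀ (y : E) (W : AffineSubspace ℝ E), (W : Set E).Nonempty → W ≠ ⊤ →
      ∃ u ∈ B, f u z ≠ y ∧ w < infDist (f u z) W)
    (hsmall : ∀ u, ∀ x ∈ S, dist (f u x) (f u z) ≤ min (δ / 4) (w / 2)) :
    ∃ (D : MoranSystem E U U) (q : PMF U), D.f = f ∧ q.bind D.ν = p := by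
  let sel := selectedPieces (fun u => f u z) B δ
  obtain ⟨q, ν, hqν, hν⟩ := exists_pmf_bind_eq hp (G := fun i u => u ∈ sel i)
    (fun i => ⟨i, .inl rfl⟩) fun u => ⟨u, .inl rfl⟩
  refine ⟨{ f, ν
            ratio := r, isSimilarityWith := hf
            carrier := S, isCompact_carrier := hS
            nonempty_carrier := ⟨z, hz⟩, mapsTo_carrier := hfS
            gap := δ / 2, gap_pos := by positivity, gap_le_dist := ?_
            width := w / 2, width_pos := by positivity, exists_width_lt_infDist := ?_ },
    q, rfl, hqν⟩
  · intro i u v huv hu hv x y hx hy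
    have hcentres : δ ≤ dist (f u z) (f v z) :=
      pairwise_selectedPieces hδ hB i ((hν i u).1 hu) ((hν i v).1 hv) huv
    have htriangle := dist_triangle4 (f u z) (f u x) (f v y) (f v z)
    rw [dist_comm (f u z) (f u x)] at htriangle
    linarith [(hsmall u x hx).trans (min_le_left _ _), (hsmall v y hy).trans (min_le_left _ _)]
  · intro i W hW hW'
    obtain ⟨u, hu, huW⟩ := exists_mem_selectedPieces_lt_infDist hB hspread i hW hW'
    refine ⟨u, (hν i u).2 hu, fun x hx => ?_⟩
    have htriangle := infDist_le_infDist_add_dist (s := (W : Set E)) (x := f u z) (y := f u x)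
    rw [dist_comm] at htriangle
    linarith [(hsmall u x hx).trans (min_le_right _ _)]

end Selection

section Construction

variable {A : Type*} {g : A → E →ᵃ[ℝ] E} {r : A → ℝ}

lemma eventually_dist_wordAffineMap_le [Finite A] (hg : ∀ a, IsSimilarityWith (r a) (g a))
    {S : Set E} (hS : Bornology.IsBounded S) {η : ℝ} (hη : 0 < η) :
    ∀ᶠ m in atTop, ∀ u : Fin m → A, ∀ x ∈ S, ∀ y ∈ S,
      dist (wordAffineMap g u x) (wordAffineMap g u y) ≤ η := by
  obtain ⟨_, _, ρ, hρ, hr⟩ := exists_ratio_bounds fun a => ⟨(hg a).1, (hg a).2.1⟩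
  have hlim : Tendsto (fun m : ℕ => (ρ : ℝ) ^ m * diam S) atTop (𝓝 0) := by
    simpa using (tendsto_pow_atTop_nhds_zero_of_lt_one ρ.2 hρ).mul_const (diam S)
  filter_upwards [hlim.eventually_le_const hη] with m hm u x hx y hy
  calc dist (wordAffineMap g u x) (wordAffineMap g u y)
      = (∏ i, r (u i)) * dist x y := dist_wordAffineMap hg u x y
    _ ≤ ρ ^ m * diam S := by
        gcongr
        · exact (Finset.prod_le_prod (fun i _ => (hg (u i)).1.le) fun i _ => (hr (u i)).2).trans_eq
            (by simp)
        · exact dist_le_diam_of_mem hS hx hy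
    _ ≤ η := hm

/-- Points of the orbit of a fixed point `z` that are robustly affinely spanning are taken as
centres; all of them are centres of pieces of one level `m`, which can be chosen so large that the
pieces are small compared with the distances between the centres. -/
lemma exists_moranSystem [Fintype A] [FiniteDimensional ℝ E]
    (hg : ∀ a, IsSimilarityWith (r a) (g a))
    (hirr : AffinelyIrreducible fun a => g a) {a₁ a₂ : A} {z : E} (hz : g a₁ z = z)
    (hne : g a₂ z ≠ z) {p : PMF A} (hp : ∀ a, p a ≠ 0) :
    ∃ (m : ℕ) (D : MoranSystem E (Fin m → A) (Fin m → A)) (q : PMF (Fin m → A)),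
      D.f = wordAffineMap g ∧ q.bind D.ν = wordPMF p m := by
  have : ProperSpace E := FiniteDimensional.proper_real E
  obtain ⟨_, _, ρ, hρ, hr⟩ := exists_ratio_bounds fun a => ⟨(hg a).1, (hg a).2.1⟩
  obtain ⟨R, hR, hball⟩ := exists_mapsTo_closedBall hρ
    (fun a => ((hg a).contractingWith (hr a).2 hρ).2) z
  have hspan := affineSpan_eq_top_of_affinelyIrreducible hirr ⟨z, mem_wordOrbit_self hz⟩
    (mapsTo_wordOrbit g z)
  obtain ⟨F, hF, w, hw, hspread⟩ :=
    exists_finset_ne_lt_infDist hspan (preperfect_wordOrbit hg hz hne)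
  obtain ⟨δ, hδ, hsep⟩ := exists_pairwise_le_dist F
  have hη : 0 < min (δ / 2 / 4) (w / 2) := by positivity
  obtain ⟨m, hm, hcentres, hsmall⟩ := ((eventually_ne_atTop 0).and
    (((eventually_all_finset F).2 fun x hx => hF hx).and
      (eventually_dist_wordAffineMap_le hg isBounded_closedBall hη))).exists
  obtain ⟨B, -, hinj, himage⟩ := Set.SurjOn.exists_subset_injOn_image_eq
    (s := Set.univ) (t := F) (f := fun u : Fin m → A => wordAffineMap g u z)
    fun x hx => let ⟨u, hu⟩ := hcentres x hx; ⟨u, trivial, hu⟩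
  rw [← himage, hinj.pairwise_image] at hsep
  refine ⟨m, exists_moranSystem_of_pairwise_le_dist
    (isSimilarityWith_wordAffineMap hg hm) (wordPMF_ne_zero hp m) (isCompact_closedBall z R)
    (mem_closedBall_self hR.le) (fun u => mapsTo_wordAffineMap u fun i => hball (u i))
    (half_pos hδ) hw (B := B) ?_ ?_ fun u x hx => hsmall u x hx z (mem_closedBall_self hR.le)⟩
  · simpa only [mul_div_cancel₀ δ two_ne_zero] using hsep
  · intro y W hW hW'
    obtain ⟨x, hx, hxy, hxW⟩ := hspread y W hW hW'
    obtain ⟨u, hu, rfl⟩ := himage.ge hx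
    exact ⟨u, hu, hxy, hxW⟩

end Construction

section Affine

/-- If `y` were at distance `ε > 0` from the range, its iterates would be `ε`-separated. -/
lemma surjective_of_isometry_of_compactSpace {X : Type*} [MetricSpace X] [CompactSpace X]
    {f : X → X} (hf : Isometry f) : Function.Surjective f := by
  intro y
  by_contra hy
  have hiter (n : ℕ) : Isometry f^[n] := n.rec isometry_id fun _ h => h.comp hf
  obtain ⟨ε, hε, hball⟩ := Metric.isOpen_iff.1
    (isCompact_range hf.continuous).isClosed.isOpen_compl y hy
  obtain ⟨_, ψ, hψ, hlim⟩ := CompactSpace.tendsto_subseq fun n => f^[n] y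
  obtain ⟨N, hN⟩ := Metric.cauchySeq_iff'.1 hlim.cauchySeq ε hε
  obtain ⟨k, hk⟩ := Nat.exists_eq_add_of_lt (hψ N.lt_add_one)
  have hclose : f^[k + 1] y ∈ ball y ε := by
    have hdist := hN (N + 1) N.le_succ
    rwa [Function.comp_apply, Function.comp_apply, hk, add_assoc, Function.iterate_add_apply,
      (hiter (ψ N)).dist_eq] at hdist
  exact hball hclose ⟨f^[k] y, (Function.iterate_succ_apply' f k y).symm⟩

lemma surjective_of_isometry_of_properSpace {V : Type*} [NormedAddCommGroup V] [ProperSpace V]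
    {f : V → V} (hf : Isometry f) : Function.Surjective f := by
  intro y
  set S := closedBall (0 : V) ‖y - f 0‖
  have : CompactSpace S := isCompact_iff_compactSpace.1 (isCompact_closedBall _ _)
  have hmaps : Set.MapsTo (fun x => f x - f 0) S S := fun x hx => by
    rwa [mem_closedBall_zero_iff, ← dist_eq_norm, hf.dist_eq, ← mem_closedBall]
  have hrestrict : Isometry hmaps.restrict := Isometry.of_dist_eq fun x x' =>
    (dist_sub_right _ _ _).trans (hf.dist_eq _ _)
  obtain ⟨x, hx⟩ := surjective_of_isometry_of_compactSpace hrestrict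
    ⟨y - f 0, mem_closedBall_zero_iff.2 le_rfl⟩
  exact ⟨x, sub_left_inj.1 (congrArg Subtype.val hx)⟩

/-- The Mazur–Ulam theorem applies to the isometry `r⁻¹ • f`. -/
lemma IsSimilarityWith.exists_affineMap_eq [FiniteDimensional ℝ E] {r : ℝ} {f : E → E}
    (hf : IsSimilarityWith r f) : ∃ g : E →ᵃ[ℝ] E, ⇑g = f := by
  have : ProperSpace E := FiniteDimensional.proper_real E
  have hiso : Isometry fun x => r⁻¹ • f x := Isometry.of_dist_eq fun x y => by
    rw [dist_smul₀, hf.dist_eq, norm_inv, Real.norm_of_nonneg hf.pos.le,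
      inv_mul_cancel_left₀ hf.pos.ne']
  let e : E ≃ᵢ E := ⟨.ofBijective _ ⟨hiso.injective, surjective_of_isometry_of_properSpace hiso⟩,
    hiso⟩
  refine ⟨r • e.toRealAffineIsometryEquiv.toAffineMap, funext fun x => ?_⟩
  exact smul_inv_smul₀ hf.pos.ne' (f x)

end Affine

section Disintegration

variable [MeasurableSpace E]

/-- `μ` is an average of probability measures that are Federer and absolutely decaying with
uniform constants. -/
def HasDecayingDisintegration (μ : Measure E) : Prop :=
  ∃ (Ω : Type) (_ : MeasurableSpace Ω) (ℙ : Measure Ω) (_ : IsProbabilityMeasure ℙ)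
    (μω : Ω → Measure E),
    (∀ ω, IsProbabilityMeasure (μω ω)) ∧
    (∀ S, MeasurableSet S → Measurable fun ω => μω ω S) ∧
    (∀ S, MeasurableSet S → μ S = ∫⁻ ω, μω ω S ∂ℙ) ∧
    ∃ C₁ C₂ α : ℝ, 0 < C₁ ∧ 0 < C₂ ∧ 0 < α ∧
      (∀ ω, IsFederer C₁ (μω ω)) ∧ ∀ ω, IsAbsolutelyDecaying C₂ α (μω ω)

variable [FiniteDimensional ℝ E] [BorelSpace E] {μ : Measure E} [IsProbabilityMeasure μ]

lemma MoranSystem.hasDecayingDisintegration {I U : Type} [Finite I] [Fintype U]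
    (D : MoranSystem E I U) {q : PMF I}
    (hμ : IsStationaryMeasure (q.bind D.ν) (fun u => D.f u) μ) : HasDecayingDisintegration μ := by
  let : MeasurableSpace I := ⊤
  let : MeasurableSpace U := ⊤
  have : CompleteSpace E := FiniteDimensional.complete ℝ E
  obtain ⟨C₁, hC₁, hfederer⟩ := D.exists_isFederer
  obtain ⟨C₂, α, hC₂, hα, hdecay⟩ := D.exists_isAbsolutelyDecaying
  exact ⟨ℕ → I, inferInstance, Measure.infinitePi fun _ => q.toMeasure, inferInstance, D.measure,
    fun _ => inferInstance, fun _ hS => (Measure.measurable_coe hS).comp D.measurable_measure,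
    fun _ hS => (D.lintegral_measure_apply hμ hS).symm, C₁, C₂, α, hC₁, hC₂, hα, hfederer, hdecay⟩

lemma IsStationaryMeasure.hasDecayingDisintegration {A : Type} [Fintype A] {g : A → E →ᵃ[ℝ] E}
    {r : A → ℝ} (hg : ∀ a, IsSimilarityWith (r a) (g a))
    (hirr : AffinelyIrreducible fun a => g a) {a₁ a₂ : A} {z : E} (hz : g a₁ z = z)
    (hne : g a₂ z ≠ z) {p : PMF A} (hp : ∀ a, p a ≠ 0)
    (hμ : IsStationaryMeasure p (fun a => g a) μ) : HasDecayingDisintegration μ := by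
  obtain ⟨m, D, q, hf, hq⟩ := exists_moranSystem hg hirr hz hne hp
  refine D.hasDecayingDisintegration (q := q) ?_
  rw [hf, hq]
  exact isStationaryMeasure_wordPMF hμ
    (fun a => (g a).continuous_of_finiteDimensional.measurable) m

end Disintegration

theorem self_similar_disintegration_general [FiniteDimensional ℝ E] [MeasurableSpace E]
    [BorelSpace E] {A : Type*} [Fintype A] (φ : A → E → E)
    (hΦ : IsSelfSimilarIFS φ) (hirr : AffinelyIrreducible φ)
    (p : A → ℝ) (hp : ∀ a, 0 < p a) (hp1 : ∑ a, p a = 1)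
    (μ : Measure E) [IsProbabilityMeasure μ]
    (hstat : μ = ∑ a, ENNReal.ofReal (p a) • Measure.map (φ a) μ) :
    HasDecayingDisintegration μ := by
  obtain ⟨-, hsim, a₁, a₂, z, z', hz, hz', hzz'⟩ := hΦ
  choose r hr using hsim
  choose g hg using fun a => (hr a).exists_affineMap_eq
  obtain rfl : (fun a => ⇑(g a)) = φ := funext hg
  have hne : g a₂ z ≠ z := fun h =>
    hzz' (((hr a₂).contractingWith (ρ := ⟨r a₂, (hr a₂).pos.le⟩) le_rfl
      (hr a₂).2.1).fixedPoint_unique' h hz')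
  let e := (Fintype.equivFin A).symm
  have hsum : ∑ i, ENNReal.ofReal (p (e i)) = 1 := by
    rw [e.sum_comp fun a => ENNReal.ofReal (p a),
      ← ENNReal.ofReal_sum_of_nonneg fun a _ => (hp a).le, hp1, ENNReal.ofReal_one]
  refine IsStationaryMeasure.hasDecayingDisintegration (g := g ∘ e) (r := r ∘ e)
    (p := PMF.ofFintype (fun i => ENNReal.ofReal (p (e i))) hsum) (a₁ := e.symm a₁)
    (a₂ := e.symm a₂) (z := z) (fun i => hr (e i)) ?_ (by simpa) (by simpa) ?_ ?_
  · rintro ⟨W, hW, hWtop, hinv⟩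
    exact hirr ⟨W, hW, hWtop, e.surjective.forall.2 hinv⟩
  · exact fun i => (ENNReal.ofReal_pos.2 (hp (e i))).ne'
  · exact hstat.trans (e.sum_comp fun a => ENNReal.ofReal (p a) • μ.map (g a)).symm

/-- Theorem 2 (self-similar disintegration). -/
theorem self_similar_disintegration
    (d : ℕ) {A : Type*} [Fintype A]
    (φ : A → EuclideanSpace ℝ (Fin d) → EuclideanSpace ℝ (Fin d))
    (hΦ : IsSelfSimilarIFS φ) (hirr : AffinelyIrreducible φ)
    (p : A → ℝ) (hp : ∀ a, 0 < p a) (hp1 : ∑ a, p a = 1)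
    (μ : Measure (EuclideanSpace ℝ (Fin d))) [IsProbabilityMeasure μ]
    (hstat : μ = ∑ a, ENNReal.ofReal (p a) • Measure.map (φ a) μ) :
    ∃ (Ω : Type) (_ : MeasurableSpace Ω) (ℙ : Measure Ω) (_ : IsProbabilityMeasure ℙ)
      (μω : Ω → Measure (EuclideanSpace ℝ (Fin d))),
      (∀ ω, IsProbabilityMeasure (μω ω)) ∧
      (∀ S : Set (EuclideanSpace ℝ (Fin d)), MeasurableSet S →
        Measurable fun ω => μω ω S) ∧
      (∀ S : Set (EuclideanSpace ℝ (Fin d)), MeasurableSet S →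
        μ S = ∫⁻ ω, μω ω S ∂ℙ) ∧
      ∃ C₁ C₂ α : ℝ, 0 < C₁ ∧ 0 < C₂ ∧ 0 < α ∧
        (∀ ω, ∀ x ∈ msupport (μω ω), ∀ r : ℝ, 0 < r →
          μω ω (Metric.closedBall x (2 * r)) ≤
            ENNReal.ofReal C₁ * μω ω (Metric.closedBall x r)) ∧
        (∀ ω, ∀ x ∈ msupport (μω ω), ∀ W : AffineSubspace ℝ (EuclideanSpace ℝ (Fin d)),
          (W : Set (EuclideanSpace ℝ (Fin d))).Nonempty → W ≠ ⊤ → ∀ r ε : ℝ,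
          0 < r → r ≤ 1 → 0 < ε →
          μω ω (affNbhd W (ε * r) ∩ Metric.closedBall x r) ≤
            ENNReal.ofReal (C₂ * ε ^ α) * μω ω (Metric.closedBall x r)) :=
  self_similar_disintegration_general φ hΦ hirr p hp hp1 μ hstat
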